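/- Let β > 1, ε > 0, μ_s > 0, δ ∈ (0,1) and M⁰ ∈ (0,1) be real numbers. Then for every ρ ≥ 0, ρ/(2μ_s + λ_{ε,δ}(ρ)) ≤ max(1/(2μ_s), 1/(ε (M⁰)^{β−1})). -/

import Mathlib

open Real

/-!
For `ρ ≤ 1` the shear viscosity alone bounds the quotient by `1 / (2μ_s)`. For `ρ ≥ 1` only the
truncated branch is active, and since `ρ / δ ≥ ρ ≥ 1` and `β ≥ 1` it dominates `ε ρ` whatever the
value of `δ`, so the quotient is at most `1 / ε`. The factor `(M⁰)^(β-1) ≤ 1` only enlarges this.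
-/

theorem div_add_le_max_one_div {K : Type*} [Field K] [LinearOrder K] [IsStrictOrderedRing K]
    {a e l x : K} (ha : 0 < a) (he : 0 < e) (hl : 0 ≤ l) (hlin : 1 ≤ x → e * x ≤ l) :
    x / (a + l) ≤ max (1 / a) (1 / e) := by
  have hal : 0 < a + l := add_pos_of_pos_of_nonneg ha hl
  rcases le_total x 1 with hx | hx
  · exact le_max_of_le_left (div_le_div₀ zero_le_one hx ha (le_add_of_nonneg_right hl))
  · refine le_max_of_le_right ((div_le_div_iff₀ hal he).2 ?_)
    linarith [hlin hx]

theorem one_div_le_one_div_mul_rpow {a x s : ℝ} (ha : 0 < a) (hx : 0 < x) (hx1 : x ≤ 1)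
    (hs : 0 ≤ s) : 1 / a ≤ 1 / (a * x ^ s) :=
  one_div_le_one_div_of_le (mul_pos ha (rpow_pos_of_pos hx s))
    (mul_le_of_le_one_right ha.le (rpow_le_one hx.le hx1 hs))

/-- The truncated bulk viscosity `λ_{ε,δ}(ρ)` with exponent `β`: the singular law
`ε (ρ / (1 - ρ))^β`, with the denominator frozen at `δ` once `ρ` exceeds `1 - δ`. It is meaningful
for `0 ≤ ρ` and `0 < δ`. -/
noncomputable def truncatedBulkViscosity (β ε δ ρ : ℝ) : ℝ :=
  if ρ ≤ 1 - δ then ε * (ρ / (1 - ρ)) ^ β else ε * (ρ / δ) ^ β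

section truncatedBulkViscosity

variable {β ε δ ρ : ℝ}

theorem truncatedBulkViscosity_nonneg (hε : 0 ≤ ε) (hδ : 0 ≤ δ) (hρ : 0 ≤ ρ) :
    0 ≤ truncatedBulkViscosity β ε δ ρ := by
  unfold truncatedBulkViscosity
  split_ifs with hle
  · have : 0 ≤ 1 - ρ := by linarith
    positivity
  · positivity

theorem mul_le_truncatedBulkViscosity (hβ : 1 ≤ β) (hε : 0 ≤ ε) (hδ : 0 < δ) (hδ1 : δ ≤ 1)
    (hρ : 1 ≤ ρ) : ε * ρ ≤ truncatedBulkViscosity β ε δ ρ := by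
  have hdiv : ρ ≤ ρ / δ := le_div_self (zero_le_one.trans hρ) hδ hδ1
  have hpow : ρ / δ ≤ (ρ / δ) ^ β := self_le_rpow_of_one_le (hρ.trans hdiv) hβ
  rw [truncatedBulkViscosity, if_neg (by linarith)]
  exact mul_le_mul_of_nonneg_left (hdiv.trans hpow) hε

end truncatedBulkViscosity

theorem stmt18_general {β ε μs δ ρ : ℝ} (hβ : 1 ≤ β) (hε : 0 < ε) (hμs : 0 < μs)
    (hδ : δ ∈ Set.Ioc (0 : ℝ) 1) (hρ : 0 ≤ ρ) :
    ρ / (2 * μs + truncatedBulkViscosity β ε δ ρ) ≤ max (1 / (2 * μs)) (1 / ε) :=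
  div_add_le_max_one_div (mul_pos two_pos hμs) hε
    (truncatedBulkViscosity_nonneg hε.le hδ.1.le hρ)
    (mul_le_truncatedBulkViscosity hβ hε.le hδ.1 hδ.2)

/-- Uniform-in-δ pointwise bound on `ρ ν_{ε,δ}(ρ) = ρ/(2μ_s + λ_{ε,δ}(ρ))`, where
the truncated bulk viscosity is `λ_{ε,δ}(ρ) = ε (ρ/(1−ρ))^β` for `ρ ≤ 1−δ` and
`ε (ρ/δ)^β` for `ρ > 1−δ`. -/
theorem stmt18 (β ε μs δ M0 ρ : ℝ) (hβ : 1 < β) (hε : 0 < ε) (hμs : 0 < μs)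
    (hδ : δ ∈ Set.Ioo (0:ℝ) 1) (hM0 : M0 ∈ Set.Ioo (0:ℝ) 1) (hρ : 0 ≤ ρ) :
    ρ / (2 * μs + (if ρ ≤ 1 - δ then ε * (ρ / (1 - ρ)) ^ β else ε * (ρ / δ) ^ β))
      ≤ max (1 / (2 * μs)) (1 / (ε * M0 ^ (β - 1))) :=
  (stmt18_general hβ.le hε hμs (Set.Ioo_subset_Ioc_self hδ) hρ).trans <|
    max_le_max_left _ (one_div_le_one_div_mul_rpow hε hM0.1 hM0.2.le (sub_nonneg.2 hβ.le))
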